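/- arXiv:1812.07232 — 7 statements merged into one kernel-verified Lean document; each statement's English description precedes it below -/
import Mathlib

section
/- For every s ∈ ℝ with s ≠ 0, one has |f(s)|/2 ≤ f'(s)·|s| < |f(s)|. -/
/-!
On the half-line `[0, ∞)`, where `f` is increasing, `(ϑ1)` makes `f' = ϑ(f)^{-1/2}` decreasing, so
`f` is strictly concave, while `(ϑ2)` makes `(f²)' = 2 f ϑ(f)^{-1/2}` nondecreasing, so `f²` is
convex. Comparing the slope of the chord from `0` to `s` with the derivative at `s` gives
`f' s * s < f s` in the first case and `f s ^ 2 ≤ 2 * f s * f' s * s` in the second. The negative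
half-line is reached by the reflection `ϑ ↦ ϑ (-·)`, `f ↦ -f (-·)`.
-/

open Set

theorem antitoneOn_sqrt_div_Ioi {ϑ : ℝ → ℝ} (hϑ : AntitoneOn (fun x ↦ ϑ x / x ^ 2) (Ioi 0)) :
    AntitoneOn (fun x ↦ √(ϑ x) / x) (Ioi 0) := by
  refine (Real.sqrt_monotone.comp_antitoneOn hϑ).congr fun x hx ↦ ?_
  simp only [Function.comp_apply, Real.sqrt_div' _ (sq_nonneg x), Real.sqrt_sq (mem_Ioi.1 hx).le]

section InvSqrtODE

variable {ϑ f : ℝ → ℝ}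

theorem strictMono_of_hasDerivAt_inv_sqrt (hϑ : ∀ x, 0 < ϑ x)
    (hf' : ∀ s, HasDerivAt f (√(ϑ (f s)))⁻¹ s) : StrictMono f :=
  strictMono_of_hasDerivAt_pos hf' fun s ↦ inv_pos.2 (Real.sqrt_pos.2 (hϑ (f s)))

theorem strictConcaveOn_Ici_of_hasDerivAt_inv_sqrt (hϑ : ∀ x, 0 < ϑ x)
    (hϑ_mono : StrictMonoOn ϑ (Ioi 0)) (hf0 : 0 ≤ f 0)
    (hf' : ∀ s, HasDerivAt f (√(ϑ (f s)))⁻¹ s) : StrictConcaveOn ℝ (Ici 0) f := by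
  have hf : StrictMono f := strictMono_of_hasDerivAt_inv_sqrt hϑ hf'
  have hf_cont : Continuous f := continuous_iff_continuousAt.2 fun s ↦ (hf' s).continuousAt
  refine StrictAntiOn.strictConcaveOn_of_deriv (convex_Ici 0) hf_cont.continuousOn ?_
  rw [interior_Ici]
  intro s hs t ht hst
  rw [(hf' s).deriv, (hf' t).deriv]
  have hϑ_lt : ϑ (f s) < ϑ (f t) :=
    hϑ_mono (hf0.trans_lt (hf hs)) (hf0.trans_lt (hf ht)) (hf hst)
  exact inv_strictAnti₀ (Real.sqrt_pos.2 (hϑ _)) (Real.sqrt_lt_sqrt (hϑ _).le hϑ_lt)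

theorem hasDerivAt_sq_of_hasDerivAt_inv_sqrt (hf' : ∀ s, HasDerivAt f (√(ϑ (f s)))⁻¹ s) (s : ℝ) :
    HasDerivAt (fun t ↦ f t ^ 2) (2 * (√(ϑ (f s)) / f s)⁻¹) s := by
  simpa [div_eq_mul_inv, mul_assoc] using (hf' s).fun_pow 2

theorem convexOn_sq_Ici_of_hasDerivAt_inv_sqrt (hϑ : ∀ x, 0 < ϑ x)
    (hϑ_anti : AntitoneOn (fun x ↦ ϑ x / x ^ 2) (Ioi 0)) (hf0 : 0 ≤ f 0)
    (hf' : ∀ s, HasDerivAt f (√(ϑ (f s)))⁻¹ s) : ConvexOn ℝ (Ici 0) (fun s ↦ f s ^ 2) := by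
  have hf : StrictMono f := strictMono_of_hasDerivAt_inv_sqrt hϑ hf'
  have hsq' := hasDerivAt_sq_of_hasDerivAt_inv_sqrt hf'
  have hsq_diff : Differentiable ℝ (fun s ↦ f s ^ 2) := fun s ↦ (hsq' s).differentiableAt
  refine MonotoneOn.convexOn_of_deriv (convex_Ici 0) hsq_diff.continuous.continuousOn
    hsq_diff.differentiableOn ?_
  rw [interior_Ici]
  intro s hs t ht hst
  rw [(hsq' s).deriv, (hsq' t).deriv]
  have hfs : 0 < f s := hf0.trans_lt (hf hs)
  have hft : 0 < f t := hf0.trans_lt (hf ht)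
  have hquot : √(ϑ (f t)) / f t ≤ √(ϑ (f s)) / f s :=
    antitoneOn_sqrt_div_Ioi hϑ_anti hfs hft (hf.monotone hst)
  have hquot_pos : 0 < √(ϑ (f t)) / f t := div_pos (Real.sqrt_pos.2 (hϑ _)) hft
  gcongr

theorem inv_sqrt_mul_lt_of_pos (hϑ : ∀ x, 0 < ϑ x) (hϑ_mono : StrictMonoOn ϑ (Ioi 0))
    (hf0 : 0 ≤ f 0) (hf' : ∀ s, HasDerivAt f (√(ϑ (f s)))⁻¹ s) {s : ℝ} (hs : 0 < s) :
    (√(ϑ (f s)))⁻¹ * s < f s := by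
  have hslope : (√(ϑ (f s)))⁻¹ < slope f 0 s :=
    (strictConcaveOn_Ici_of_hasDerivAt_inv_sqrt hϑ hϑ_mono hf0 hf').lt_slope_of_hasDerivAt
      self_mem_Ici hs.le hs (hf' s)
  rw [slope_def_field, sub_zero, lt_div_iff₀ hs] at hslope
  linarith

theorem half_le_inv_sqrt_mul_of_pos (hϑ : ∀ x, 0 < ϑ x)
    (hϑ_anti : AntitoneOn (fun x ↦ ϑ x / x ^ 2) (Ioi 0)) (hf0 : f 0 = 0)
    (hf' : ∀ s, HasDerivAt f (√(ϑ (f s)))⁻¹ s) {s : ℝ} (hs : 0 < s) :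
    f s / 2 ≤ (√(ϑ (f s)))⁻¹ * s := by
  have hfs : 0 < f s := hf0 ▸ strictMono_of_hasDerivAt_inv_sqrt hϑ hf' hs
  have hslope : slope (fun t ↦ f t ^ 2) 0 s ≤ 2 * (√(ϑ (f s)) / f s)⁻¹ :=
    (convexOn_sq_Ici_of_hasDerivAt_inv_sqrt hϑ hϑ_anti hf0.ge hf').slope_le_of_hasDerivAt
      self_mem_Ici hs.le hs (hasDerivAt_sq_of_hasDerivAt_inv_sqrt hf' s)
  rw [slope_def_field, hf0, zero_pow two_ne_zero, sub_zero, sub_zero, div_le_iff₀ hs,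
    inv_div, div_eq_mul_inv] at hslope
  refine le_of_mul_le_mul_left ?_ hfs
  linarith

-- The double negation exhibits `g t = -f (-t)` as a solution of `g' = ψ(g)^{-1/2}` with
-- `ψ x = ϑ (-x)`.
theorem hasDerivAt_neg_comp_neg_inv_sqrt (hf' : ∀ s, HasDerivAt f (√(ϑ (f s)))⁻¹ s) (s : ℝ) :
    HasDerivAt (fun t ↦ -f (-t)) (√(ϑ (-(-f (-s)))))⁻¹ s := by
  simpa using ((hf' (-s)).scomp s (hasDerivAt_neg s)).fun_neg

theorem lt_inv_sqrt_mul_of_neg (hϑ : ∀ x, 0 < ϑ x) (hϑ_anti : StrictAntiOn ϑ (Iio 0))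
    (hf0 : f 0 ≤ 0) (hf' : ∀ s, HasDerivAt f (√(ϑ (f s)))⁻¹ s) {s : ℝ} (hs : s < 0) :
    f s < (√(ϑ (f s)))⁻¹ * s := by
  have hϑ_neg : StrictMonoOn (fun x ↦ ϑ (-x)) (Ioi 0) := fun _ hx _ hy hxy ↦
    hϑ_anti (mem_Iio.2 (neg_lt_zero.2 hy)) (mem_Iio.2 (neg_lt_zero.2 hx)) (neg_lt_neg hxy)
  have hg0 : 0 ≤ -f (-0) := by simpa using hf0
  have hlt := inv_sqrt_mul_lt_of_pos (fun x ↦ hϑ (-x)) hϑ_neg hg0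
    (hasDerivAt_neg_comp_neg_inv_sqrt hf') (neg_pos.2 hs)
  simpa only [neg_neg, mul_neg, neg_lt_neg_iff] using hlt

theorem inv_sqrt_mul_le_half_of_neg (hϑ : ∀ x, 0 < ϑ x)
    (hϑ_mono : MonotoneOn (fun x ↦ ϑ x / x ^ 2) (Iio 0)) (hf0 : f 0 = 0)
    (hf' : ∀ s, HasDerivAt f (√(ϑ (f s)))⁻¹ s) {s : ℝ} (hs : s < 0) :
    (√(ϑ (f s)))⁻¹ * s ≤ f s / 2 := by
  have hϑ_neg : AntitoneOn (fun x ↦ ϑ (-x) / x ^ 2) (Ioi 0) := fun x hx y hy hxy ↦ by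
    simpa only [neg_sq] using
      hϑ_mono (mem_Iio.2 (neg_lt_zero.2 hy)) (mem_Iio.2 (neg_lt_zero.2 hx)) (neg_le_neg hxy)
  have hg0 : -f (-0) = 0 := by simpa using hf0
  have hle := half_le_inv_sqrt_mul_of_pos (fun x ↦ hϑ (-x)) hϑ_neg hg0
    (hasDerivAt_neg_comp_neg_inv_sqrt hf') (neg_pos.2 hs)
  simpa only [neg_neg, mul_neg, neg_div, neg_le_neg_iff] using hle

end InvSqrtODE

theorem f_deriv_estimates_general (ϑ f : ℝ → ℝ) (hϑ : ∀ s, 0 < ϑ s)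
    (hϑ1 : StrictAntiOn ϑ (Iio 0)) (hϑ1' : StrictMonoOn ϑ (Ioi 0))
    (hϑ2 : MonotoneOn (fun s ↦ ϑ s / s ^ 2) (Iio 0))
    (hϑ2' : AntitoneOn (fun s ↦ ϑ s / s ^ 2) (Ioi 0))
    (hf0 : f 0 = 0) (hf' : ∀ s, HasDerivAt f (√(ϑ (f s)))⁻¹ s) (s : ℝ) (hs : s ≠ 0) :
    |f s| / 2 ≤ deriv f s * |s| ∧ deriv f s * |s| < |f s| := by
  have hf : StrictMono f := strictMono_of_hasDerivAt_inv_sqrt hϑ hf'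
  rw [(hf' s).deriv]
  rcases hs.lt_or_gt with hs | hs
  · have hfs : f s < 0 := hf0 ▸ hf hs
    rw [abs_of_neg hs, abs_of_neg hfs, neg_div, mul_neg]
    exact ⟨neg_le_neg (inv_sqrt_mul_le_half_of_neg hϑ hϑ2 hf0 hf' hs),
      neg_lt_neg (lt_inv_sqrt_mul_of_neg hϑ hϑ1 hf0.le hf' hs)⟩
  · have hfs : 0 < f s := hf0 ▸ hf hs
    rw [abs_of_pos hs, abs_of_pos hfs]
    exact ⟨half_le_inv_sqrt_mul_of_pos hϑ hϑ2' hf0 hf' hs,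
      inv_sqrt_mul_lt_of_pos hϑ hϑ1' hf0.ge hf' hs⟩

/-- Lemma 2.1(v), first part: `|f(s)|/2 ≤ f'(s)|s| < |f(s)|` for `s ≠ 0`. -/
theorem f_deriv_estimates (ϑ f : ℝ → ℝ)
    (hϑC1 : ContDiff ℝ 1 ϑ) (hϑeven : ∀ s, ϑ (-s) = ϑ s) (hϑ1 : ∀ s, 1 ≤ ϑ s)
    (hϑ1' : StrictAntiOn ϑ (Set.Iio 0)) (hϑ1'' : StrictMonoOn ϑ (Set.Ioi 0))
    (hϑ2 : MonotoneOn (fun s => ϑ s / s ^ 2) (Set.Iio 0))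
    (hϑ2' : AntitoneOn (fun s => ϑ s / s ^ 2) (Set.Ioi 0))
    (hfodd : ∀ s, f (-s) = - f s) (hfC2 : ContDiff ℝ 2 f) (hf0 : f 0 = 0)
    (hf' : ∀ s, HasDerivAt f ((Real.sqrt (ϑ (f s)))⁻¹) s) :
    ∀ s : ℝ, s ≠ 0 → |f s| / 2 ≤ deriv f s * |s| ∧ deriv f s * |s| < |f s| :=
  f_deriv_estimates_general ϑ f (fun s ↦ one_pos.trans_le (hϑ1 s)) hϑ1' hϑ1'' hϑ2 hϑ2' hf0 hf'
end

section
/- The map s ↦ |f(s)|/√|s| is nonincreasing on (−∞, 0) and nondecreasing on (0, ∞). -/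
/-! On `(0, ∞)` the function `f` is positive and increasing, and `t / √ϑ(t) = (ϑ(t) / t²)^(-1/2)` is
nondecreasing. Hence so is `2 f / √(ϑ ∘ f)`, the derivative of `f²`, and `f²` is convex on `[0, ∞)`.
It vanishes at `0`, so the slope `f(s)² / s` of its secant from the origin is nondecreasing, and so
is the square root of that slope. The negative half-line follows by applying this to `s ↦ -f (-s)`
and `t ↦ ϑ (-t)`. -/

open Set

theorem monotoneOn_mul_inv_sqrt_of_antitoneOn_div_sq {ϑ : ℝ → ℝ} {S : Set ℝ} (hS : S ⊆ Ioi 0)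
    (hpos : ∀ t ∈ S, 0 < ϑ t) (hanti : AntitoneOn (fun t => ϑ t / t ^ 2) S) :
    MonotoneOn (fun t => t * (√(ϑ t))⁻¹) S := by
  have mul_inv_sqrt_eq : ∀ t ∈ S, t * (√(ϑ t))⁻¹ = √((ϑ t / t ^ 2)⁻¹) := fun t ht => by
    rw [inv_div, Real.sqrt_div (sq_nonneg t), Real.sqrt_sq (hS ht).le, div_eq_mul_inv]
  intro a ha b hb hab
  have hb_pos : 0 < ϑ b / b ^ 2 := div_pos (hpos b hb) (pow_pos (hS hb) 2)
  simpa only [mul_inv_sqrt_eq a ha, mul_inv_sqrt_eq b hb] using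
    Real.sqrt_le_sqrt (inv_anti₀ hb_pos (hanti ha hb hab))

theorem convexOn_sq_of_monotoneOn_mul_deriv {f f' : ℝ → ℝ} {D : Set ℝ} (hD : Convex ℝ D)
    (hcont : ContinuousOn f D) (hderiv : ∀ s ∈ interior D, HasDerivAt f (f' s) s)
    (hmono : MonotoneOn (fun s => f s * f' s) (interior D)) :
    ConvexOn ℝ D (fun s => f s ^ 2) := by
  have hderiv_sq : ∀ s ∈ interior D, HasDerivAt (fun s => f s ^ 2) (2 * (f s * f' s)) s :=
    fun s hs => ((hderiv s hs).fun_pow 2).congr_deriv (by ring)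
  refine MonotoneOn.convexOn_of_deriv hD (hcont.pow 2)
    (fun s hs => (hderiv_sq s hs).differentiableAt.differentiableWithinAt) ?_
  intro x hx y hy hxy
  rw [(hderiv_sq x hx).deriv, (hderiv_sq y hy).deriv]
  exact mul_le_mul_of_nonneg_left (hmono hx hy hxy) zero_le_two

theorem monotoneOn_abs_div_sqrt_abs_of_convexOn_sq {f : ℝ → ℝ}
    (hconv : ConvexOn ℝ (Ici 0) (fun s => f s ^ 2)) (hf0 : f 0 = 0) :
    MonotoneOn (fun s => |f s| / √|s|) (Ioi 0) := by
  have abs_div_sqrt_eq : ∀ s ∈ Ioi (0 : ℝ), |f s| / √|s| = √((f s ^ 2 - f 0 ^ 2) / (s - 0)) :=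
    fun s hs => by
      rw [hf0, zero_pow two_ne_zero, sub_zero, sub_zero, Real.sqrt_div (sq_nonneg (f s)),
        Real.sqrt_sq_eq_abs, abs_of_pos (mem_Ioi.1 hs)]
  intro x hx y hy hxy
  simpa only [abs_div_sqrt_eq x hx, abs_div_sqrt_eq y hy] using
    Real.sqrt_le_sqrt (hconv.secant_mono self_mem_Ici (Ioi_subset_Ici_self hx)
      (Ioi_subset_Ici_self hy) hx.ne' hy.ne' hxy)

theorem monotoneOn_abs_div_sqrt_abs_of_hasDerivAt_inv_sqrt {ϑ f : ℝ → ℝ} (hϑ : ∀ t, 0 < ϑ t)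
    (hanti : AntitoneOn (fun t => ϑ t / t ^ 2) (Ioi 0)) (hf0 : f 0 = 0)
    (hcont : ContinuousOn f (Ici 0))
    (hderiv : ∀ s ∈ Ioi (0 : ℝ), HasDerivAt f (√(ϑ (f s)))⁻¹ s) :
    MonotoneOn (fun s => |f s| / √|s|) (Ioi 0) := by
  have hmono : StrictMonoOn f (Ici 0) := by
    refine strictMonoOn_of_deriv_pos (convex_Ici 0) hcont fun s hs => ?_
    rw [interior_Ici] at hs
    rw [(hderiv s hs).deriv]
    exact inv_pos.2 (Real.sqrt_pos.2 (hϑ (f s)))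
  have hmaps : MapsTo f (Ioi 0) (Ioi 0) := fun s hs =>
    hf0 ▸ hmono self_mem_Ici (Ioi_subset_Ici_self hs) hs
  have hmono_mul_deriv : MonotoneOn (fun s => f s * (√(ϑ (f s)))⁻¹) (Ioi 0) :=
    (monotoneOn_mul_inv_sqrt_of_antitoneOn_div_sq Subset.rfl (fun t _ => hϑ t) hanti).comp
      (hmono.monotoneOn.mono Ioi_subset_Ici_self) hmaps
  rw [← interior_Ici] at hderiv hmono_mul_deriv
  exact monotoneOn_abs_div_sqrt_abs_of_convexOn_sq
    (convexOn_sq_of_monotoneOn_mul_deriv (convex_Ici 0) hcont hderiv hmono_mul_deriv) hf0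

theorem f_sqrt_monotonicity_general {ϑ f : ℝ → ℝ} (hϑ : ∀ t, 0 < ϑ t)
    (hϑ_neg : MonotoneOn (fun t => ϑ t / t ^ 2) (Iio 0))
    (hϑ_pos : AntitoneOn (fun t => ϑ t / t ^ 2) (Ioi 0)) (hf0 : f 0 = 0)
    (hderiv : ∀ s, HasDerivAt f (√(ϑ (f s)))⁻¹ s) :
    AntitoneOn (fun s => |f s| / √|s|) (Iio 0) ∧ MonotoneOn (fun s => |f s| / √|s|) (Ioi 0) := by
  refine ⟨?_, monotoneOn_abs_div_sqrt_abs_of_hasDerivAt_inv_sqrt hϑ hϑ_pos hf0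
    (fun s _ => (hderiv s).continuousAt.continuousWithinAt) fun s _ => hderiv s⟩
  have hϑ_refl : AntitoneOn (fun t => ϑ (-t) / t ^ 2) (Ioi 0) := fun a ha b hb hab => by
    simpa only [neg_sq] using hϑ_neg (mem_Iio.2 (neg_lt_zero.2 hb)) (mem_Iio.2 (neg_lt_zero.2 ha))
      (neg_le_neg hab)
  have hderiv_refl (s : ℝ) : HasDerivAt (fun s => -f (-s)) (√(ϑ (- -f (-s))))⁻¹ s := by
    simpa only [Function.comp_def, mul_neg_one, neg_neg] using
      ((hderiv (-s)).comp s (hasDerivAt_neg s)).fun_neg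
  have hmono_refl : MonotoneOn (fun s => |-f (-s)| / √|s|) (Ioi 0) :=
    monotoneOn_abs_div_sqrt_abs_of_hasDerivAt_inv_sqrt (fun t => hϑ (-t)) hϑ_refl
      (by rw [neg_zero, hf0, neg_zero])
      (fun s _ => (hderiv_refl s).continuousAt.continuousWithinAt) fun s _ => hderiv_refl s
  intro x hx y hy hxy
  simpa only [neg_neg, abs_neg] using
    hmono_refl (mem_Ioi.2 (neg_pos.2 hy)) (mem_Ioi.2 (neg_pos.2 hx)) (neg_le_neg hxy)

/-- Lemma 2.1(v), second part: `s ↦ |f(s)|/√|s|` is nonincreasing on `(-∞,0)`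
and nondecreasing on `(0,∞)`. -/
theorem f_sqrt_monotonicity (ϑ f : ℝ → ℝ)
    (hϑC1 : ContDiff ℝ 1 ϑ) (hϑeven : ∀ s, ϑ (-s) = ϑ s) (hϑ1 : ∀ s, 1 ≤ ϑ s)
    (hϑ1' : StrictAntiOn ϑ (Set.Iio 0)) (hϑ1'' : StrictMonoOn ϑ (Set.Ioi 0))
    (hϑ2 : MonotoneOn (fun s => ϑ s / s ^ 2) (Set.Iio 0))
    (hϑ2' : AntitoneOn (fun s => ϑ s / s ^ 2) (Set.Ioi 0))
    (hfodd : ∀ s, f (-s) = - f s) (hfC2 : ContDiff ℝ 2 f) (hf0 : f 0 = 0)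
    (hf' : ∀ s, HasDerivAt f ((Real.sqrt (ϑ (f s)))⁻¹) s) :
    AntitoneOn (fun s => |f s| / Real.sqrt |s|) (Set.Iio 0) ∧
    MonotoneOn (fun s => |f s| / Real.sqrt |s|) (Set.Ioi 0) :=
  f_sqrt_monotonicity_general (fun s => one_pos.trans_le (hϑ1 s)) hϑ2 hϑ2' hf0 hf'
end

section
/- The limit lim_{|s|→∞} |f(s)|/√|s| exists and equals (8/α²)^{1/4}. -/
/-!
Along the equation `f' = ϑ(f)^{-1/2}` one has `(f²)' = 2 f / √(ϑ f)`. The function `f` increases,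
and a finite limit would be a zero of the positive speed `ϑ^{-1/2}`, so `f → +∞`. Since
`ϑ(t) / t² → L`, the derivative of `f²` then tends to `2 / √L`. Averaging,
`f(s)² / s → √(4 / L)`, and it remains to take square roots. The equation is invariant under
`(f(s), ϑ(t)) ↦ (-f(-s), ϑ(-t))`, which turns the limit at `+∞` into the one at `-∞`.
-/

open Asymptotics Filter Topology

section AverageOfDerivative

variable {E : Type*} [NormedAddCommGroup E] [NormedSpace ℝ E] {g g' : ℝ → E}

theorem isLittleO_id_atTop_of_hasDerivAt_of_tendsto_zero
    (hg : ∀ᶠ s in atTop, HasDerivAt g (g' s) s) (hg' : Tendsto g' atTop (𝓝 0)) :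
    g =o[atTop] (id : ℝ → ℝ) := by
  refine isLittleO_iff.2 fun ε hε => ?_
  have hsmall : ∀ᶠ s in atTop, ‖g' s‖ ≤ ε / 2 :=
    hg'.norm.eventually_le_const (by simpa using half_pos hε)
  obtain ⟨T, hT0, hT⟩ := (atTop_basis' 0).eventually_iff.1 (hg.and hsmall)
  have hincr : ∀ s ≥ T, ‖g s - g T‖ ≤ ε / 2 * ‖s - T‖ := fun s hs =>
    (convex_Ici T).norm_image_sub_le_of_norm_hasDerivWithin_le
      (fun x hx => (hT hx).1.hasDerivWithinAt) (fun x hx => (hT hx).2)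
      Set.self_mem_Ici hs
  have hconst : ∀ᶠ s : ℝ in atTop, ‖g T‖ ≤ ε / 2 * ‖s‖ :=
    (isLittleO_const_id_atTop (g T)).bound (half_pos hε)
  filter_upwards [hconst, eventually_ge_atTop T] with s hgT hTs
  have hshift : ‖s - T‖ ≤ ‖s‖ := by
    rw [Real.norm_of_nonneg (sub_nonneg.2 hTs), Real.norm_of_nonneg (hT0.trans hTs)]
    exact sub_le_self s hT0
  calc ‖g s‖ ≤ ‖g s - g T‖ + ‖g T‖ := norm_le_norm_sub_add _ _
    _ ≤ ε / 2 * ‖s‖ + ε / 2 * ‖s‖ := add_le_add ((hincr s hTs).trans (by gcongr)) hgT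
    _ = ε * ‖s‖ := by ring

theorem tendsto_inv_smul_atTop_of_hasDerivAt {m : E}
    (hg : ∀ᶠ s in atTop, HasDerivAt g (g' s) s) (hg' : Tendsto g' atTop (𝓝 m)) :
    Tendsto (fun s => s⁻¹ • g s) atTop (𝓝 m) := by
  have hlin : (fun s => g s - s • m) =o[atTop] (id : ℝ → ℝ) := by
    refine isLittleO_id_atTop_of_hasDerivAt_of_tendsto_zero (g' := fun s => g' s - m) ?_
      (by simpa using hg'.sub_const m)
    filter_upwards [hg] with s hs
    simpa using hs.fun_sub ((hasDerivAt_id s).smul_const m)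
  have hsum := hlin.tendsto_inv_smul_nhds_zero.add_const m
  rw [zero_add] at hsum
  refine hsum.congr' ?_
  filter_upwards [eventually_ne_atTop 0] with s hs
  rw [id, smul_sub, inv_smul_smul₀ hs, sub_add_cancel]

end AverageOfDerivative

theorem tendsto_atTop_of_hasDerivAt_comp {v f : ℝ → ℝ} (hv : Continuous v) (hpos : ∀ t, 0 < v t)
    (hf : ∀ s, HasDerivAt f (v (f s)) s) : Tendsto f atTop atTop := by
  have hmono : StrictMono f := strictMono_of_hasDerivAt_pos hf fun s => hpos (f s)
  refine (tendsto_atTop_of_monotone hmono.monotone).resolve_right ?_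
  rintro ⟨M, hM⟩
  have hslope : Tendsto (fun s => s⁻¹ • f s) atTop (𝓝 (v M)) :=
    tendsto_inv_smul_atTop_of_hasDerivAt (.of_forall hf) ((hv.tendsto M).comp hM)
  have hslope_zero : Tendsto (fun s => s⁻¹ • f s) atTop (𝓝 0) := by
    simpa using tendsto_inv_atTop_zero.smul hM
  exact (hpos M).ne' (tendsto_nhds_unique hslope hslope_zero)

theorem tendsto_div_sqrt_atTop {ϑ : ℝ → ℝ} {L : ℝ} (hL : 0 < L)
    (hϑ : Tendsto (fun t => ϑ t / t ^ 2) atTop (𝓝 L)) :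
    Tendsto (fun t => t / √(ϑ t)) atTop (𝓝 (√L)⁻¹) := by
  refine (hϑ.sqrt.inv₀ (Real.sqrt_ne_zero'.2 hL)).congr' ?_
  filter_upwards [eventually_ge_atTop 0] with t ht
  rw [Real.sqrt_div' _ (sq_nonneg t), Real.sqrt_sq ht, inv_div]

section InverseSqrtFlow

variable {ϑ f : ℝ → ℝ} {L : ℝ}

theorem tendsto_sq_div_atTop_of_hasDerivAt_inv_sqrt (hϑcont : Continuous ϑ)
    (hϑpos : ∀ t, 0 < ϑ t) (hL : 0 < L) (hϑ : Tendsto (fun t => ϑ t / t ^ 2) atTop (𝓝 L))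
    (hf : ∀ s, HasDerivAt f (√(ϑ (f s)))⁻¹ s) :
    Tendsto (fun s => f s ^ 2 / s) atTop (𝓝 √(4 / L)) := by
  have hsqrt : ∀ t, 0 < √(ϑ t) := fun t => Real.sqrt_pos.2 (hϑpos t)
  have hftop : Tendsto f atTop atTop :=
    tendsto_atTop_of_hasDerivAt_comp (hϑcont.sqrt.inv₀ fun t => (hsqrt t).ne')
      (fun t => inv_pos.2 (hsqrt t)) hf
  have hderiv : ∀ s, HasDerivAt (fun s => f s ^ 2) (2 * (f s / √(ϑ (f s)))) s := fun s =>
    ((hf s).fun_pow 2).congr_deriv (by simp [div_eq_mul_inv, mul_assoc])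
  have hlim : Tendsto (fun s => 2 * (f s / √(ϑ (f s)))) atTop (𝓝 (2 * (√L)⁻¹)) :=
    ((tendsto_div_sqrt_atTop hL hϑ).comp hftop).const_mul 2
  have hvalue : √(4 / L) = 2 * (√L)⁻¹ := by
    rw [Real.sqrt_div zero_le_four, div_eq_mul_inv, show (4 : ℝ) = 2 ^ 2 by norm_num,
      Real.sqrt_sq zero_le_two]
  rw [hvalue]
  simpa only [smul_eq_mul, inv_mul_eq_div] using
    tendsto_inv_smul_atTop_of_hasDerivAt (.of_forall hderiv) hlim

theorem tendsto_abs_div_sqrt_atTop_of_hasDerivAt_inv_sqrt (hϑcont : Continuous ϑ)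
    (hϑpos : ∀ t, 0 < ϑ t) (hL : 0 < L) (hϑ : Tendsto (fun t => ϑ t / t ^ 2) atTop (𝓝 L))
    (hf : ∀ s, HasDerivAt f (√(ϑ (f s)))⁻¹ s) :
    Tendsto (fun s => |f s| / √|s|) atTop (𝓝 ((4 / L) ^ ((1 : ℝ) / 4))) := by
  have hroot : √√(4 / L) = (4 / L) ^ ((1 : ℝ) / 4) := by
    rw [Real.sqrt_eq_rpow, Real.sqrt_eq_rpow, ← Real.rpow_mul (by positivity)]
    norm_num
  rw [← hroot]
  refine (tendsto_sq_div_atTop_of_hasDerivAt_inv_sqrt hϑcont hϑpos hL hϑ hf).sqrt.congr' ?_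
  filter_upwards [eventually_ge_atTop 0] with s hs
  rw [Real.sqrt_div (sq_nonneg _), Real.sqrt_sq_eq_abs, abs_of_nonneg hs]

theorem f_sqrt_limit_at_infinity_general (hϑcont : Continuous ϑ) (hϑpos : ∀ t, 0 < ϑ t)
    (hL : 0 < L) (hϑ : Tendsto (fun t => ϑ t / t ^ 2) (cocompact ℝ) (𝓝 L))
    (hf : ∀ s, HasDerivAt f (√(ϑ (f s)))⁻¹ s) :
    Tendsto (fun s => |f s| / √|s|) (cocompact ℝ) (𝓝 ((4 / L) ^ ((1 : ℝ) / 4))) := by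
  have hϑbot : Tendsto (fun t => ϑ (-t) / t ^ 2) atTop (𝓝 L) := by
    simpa [Function.comp_def] using (hϑ.mono_left atBot_le_cocompact).comp tendsto_neg_atTop_atBot
  have hreflected : ∀ s, HasDerivAt (fun s => -f (-s)) (√(ϑ (- -f (-s))))⁻¹ s := fun s =>
    ((hf (-s)).comp s (hasDerivAt_neg s)).fun_neg.congr_deriv (by simp)
  have hbot := tendsto_abs_div_sqrt_atTop_of_hasDerivAt_inv_sqrt (hϑcont.comp continuous_neg)
    (fun t => hϑpos (-t)) hL hϑbot hreflected
  rw [cocompact_eq_atBot_atTop]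
  refine .sup ?_ (tendsto_abs_div_sqrt_atTop_of_hasDerivAt_inv_sqrt hϑcont hϑpos hL
    (hϑ.mono_left atTop_le_cocompact) hf)
  simpa [Function.comp_def] using hbot.comp tendsto_neg_atBot_atTop

end InverseSqrtFlow

/-- Lemma 2.1(vi), first part: `lim_{|s|→∞} |f(s)|/√|s| = (8/α²)^{1/4}`. -/
theorem f_sqrt_limit_at_infinity (ϑ f : ℝ → ℝ) (α : ℝ) (hα : 0 < α)
    (hϑC1 : ContDiff ℝ 1 ϑ) (hϑeven : ∀ s, ϑ (-s) = ϑ s) (hϑ1 : ∀ s, 1 ≤ ϑ s)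
    (hϑ1' : StrictAntiOn ϑ (Set.Iio 0)) (hϑ1'' : StrictMonoOn ϑ (Set.Ioi 0))
    (hϑ2 : MonotoneOn (fun s => ϑ s / s ^ 2) (Set.Iio 0))
    (hϑ2' : AntitoneOn (fun s => ϑ s / s ^ 2) (Set.Ioi 0))
    (hϑ3 : Filter.Tendsto (fun s => ϑ s / s ^ 2) (Filter.cocompact ℝ) (nhds (α ^ 2 / 2)))
    (hfodd : ∀ s, f (-s) = - f s) (hfC2 : ContDiff ℝ 2 f) (hf0 : f 0 = 0)
    (hf' : ∀ s, HasDerivAt f ((Real.sqrt (ϑ (f s)))⁻¹) s) :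
    Filter.Tendsto (fun s => |f s| / Real.sqrt |s|) (Filter.cocompact ℝ)
      (nhds ((8 / α ^ 2) ^ ((1:ℝ)/4))) := by
  rw [show 8 / α ^ 2 = 4 / (α ^ 2 / 2) by ring]
  exact f_sqrt_limit_at_infinity_general hϑC1.continuous (fun t => one_pos.trans_le (hϑ1 t))
    (by positivity) hϑ3 hf'
end

section
/- The limit lim_{|s|→∞} f(s)/s exists and equals 0. -/
/-!
The curve `f` has speed `ϑ(f)^(-1/2)`, which is small wherever `f` is large, because `ϑ` grows
quadratically. Given `ε > 0`, pick `R` such that the speed is below `ε` wherever `‖f‖ ≥ R`. Then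
`‖f‖` cannot cross the line `max ‖f 0‖ R + ε * |s|`, since at a contact point `‖f‖ ≥ R` and so `‖f‖`
grows more slowly than the line. As `ε` is arbitrary, `f` grows sublinearly.
-/

open Bornology Filter Set Topology
open scoped Asymptotics

section SublinearGrowth

variable {E : Type*} [NormedAddCommGroup E] [NormedSpace ℝ E] {f f' : ℝ → E} {R ε : ℝ}

lemma norm_le_max_add_mul_sub_of_norm_deriv_right_lt {a b : ℝ} (hε : 0 ≤ ε)
    (hf : ContinuousOn f (Icc a b)) (hf' : ∀ x ∈ Ico a b, HasDerivWithinAt f (f' x) (Ici x) x)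
    (bound : ∀ x ∈ Ico a b, R ≤ ‖f x‖ → ‖f' x‖ < ε) ⦃x : ℝ⦄ (hx : x ∈ Icc a b) :
    ‖f x‖ ≤ max ‖f a‖ R + ε * (x - a) := by
  have hline (y : ℝ) : HasDerivAt (fun y ↦ max ‖f a‖ R + ε * (y - a)) ε y := by
    simpa only [id, mul_one] using
      (((hasDerivAt_id y).sub_const a).const_mul ε).const_add (max ‖f a‖ R)
  refine image_norm_le_of_norm_deriv_right_lt_deriv_boundary hf hf' (by simp) hline
    (fun y hy hcontact ↦ bound y hy ?_) hx
  calc R ≤ max ‖f a‖ R := le_max_right _ _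
    _ ≤ max ‖f a‖ R + ε * (y - a) :=
      le_add_of_nonneg_right (mul_nonneg hε (sub_nonneg.2 hy.1))
    _ = ‖f y‖ := hcontact.symm

lemma norm_le_max_add_mul_abs_of_norm_deriv_lt (hε : 0 ≤ ε) (hf : ∀ s, HasDerivAt f (f' s) s)
    (bound : ∀ s, R ≤ ‖f s‖ → ‖f' s‖ < ε) (s : ℝ) :
    ‖f s‖ ≤ max ‖f 0‖ R + ε * |s| := by
  wlog hs : 0 ≤ s generalizing f f' s
  · have hreflect (t : ℝ) : HasDerivAt (fun t ↦ f (-t)) (-f' (-t)) t := by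
      simpa only [neg_smul, one_smul, Function.comp_def] using
        (hf (-t)).scomp t (hasDerivAt_neg t)
    simpa only [neg_neg, neg_zero, abs_neg] using
      this hreflect (fun t ht ↦ (norm_neg (f' (-t))).trans_lt (bound (-t) ht)) (-s)
        (neg_nonneg.2 (not_le.1 hs).le)
  · simpa only [sub_zero, abs_of_nonneg hs] using
      norm_le_max_add_mul_sub_of_norm_deriv_right_lt hε
        (fun t _ ↦ (hf t).continuousAt.continuousWithinAt) (fun t _ ↦ (hf t).hasDerivWithinAt)
        (fun t _ ↦ bound t) (right_mem_Icc.2 hs)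

lemma isLittleO_id_cocompact_of_tendsto_deriv (hf : ∀ s, HasDerivAt f (f' s) s)
    (hf' : Tendsto f' (comap f (cobounded E)) (𝓝 0)) : f =o[cocompact ℝ] (id : ℝ → ℝ) := by
  refine Asymptotics.isLittleO_iff.2 fun c hc ↦ ?_
  obtain ⟨R, hR⟩ : ∃ R, ∀ s, R ≤ ‖f s‖ → ‖f' s‖ < c / 2 := by
    have hsmall := hf'.norm.eventually_lt_const (norm_zero.trans_lt (half_pos hc))
    simpa using ((hasBasis_cobounded_norm.comap f).eventually_iff).1 hsmall
  have hlarge : ∀ᶠ s : ℝ in cocompact ℝ, max ‖f 0‖ R ≤ c / 2 * ‖s‖ :=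
    (tendsto_norm_cocompact_atTop.const_mul_atTop (half_pos hc)).eventually_ge_atTop _
  filter_upwards [hlarge] with s hs
  calc ‖f s‖ ≤ max ‖f 0‖ R + c / 2 * ‖s‖ :=
      norm_le_max_add_mul_abs_of_norm_deriv_lt (half_pos hc).le hf hR s
    _ ≤ c / 2 * ‖s‖ + c / 2 * ‖s‖ := by gcongr
    _ = c * ‖id s‖ := by rw [← add_mul, add_halves, id]

theorem f_over_s_limit_at_infinity_general (hf : ∀ s, HasDerivAt f (f' s) s)
    (hf' : Tendsto f' (comap f (cobounded E)) (𝓝 0)) :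
    Tendsto (fun s ↦ s⁻¹ • f s) (cocompact ℝ) (𝓝 0) :=
  (isLittleO_id_cocompact_of_tendsto_deriv hf hf').tendsto_inv_smul_nhds_zero

end SublinearGrowth

lemma tendsto_sq_cocompact_atTop : Tendsto (fun s : ℝ ↦ s ^ 2) (cocompact ℝ) atTop := by
  simpa only [Real.norm_eq_abs, sq_abs, Function.comp_def] using
    (tendsto_pow_atTop two_ne_zero).comp (tendsto_norm_cocompact_atTop (E := ℝ))

lemma tendsto_inv_sqrt_cobounded_of_tendsto_div_sq {ϑ : ℝ → ℝ} {c : ℝ} (hc : 0 < c)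
    (hϑ : Tendsto (fun s ↦ ϑ s / s ^ 2) (cocompact ℝ) (𝓝 c)) :
    Tendsto (fun s ↦ (√(ϑ s))⁻¹) (cobounded ℝ) (𝓝 0) := by
  have hϑ_atTop : Tendsto ϑ (cocompact ℝ) atTop := tendsto_sq_cocompact_atTop.num hc hϑ
  rw [Metric.cobounded_eq_cocompact]
  exact (Real.tendsto_sqrt_atTop.comp hϑ_atTop).inv_tendsto_atTop

/-- Lemma 2.1(vi), second part: `lim_{|s|→∞} f(s)/s = 0`. -/
theorem f_over_s_limit_at_infinity (ϑ f : ℝ → ℝ) (α : ℝ) (hα : 0 < α)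
    (hϑC1 : ContDiff ℝ 1 ϑ) (hϑeven : ∀ s, ϑ (-s) = ϑ s) (hϑ1 : ∀ s, 1 ≤ ϑ s)
    (hϑ1' : StrictAntiOn ϑ (Set.Iio 0)) (hϑ1'' : StrictMonoOn ϑ (Set.Ioi 0))
    (hϑ2 : MonotoneOn (fun s => ϑ s / s ^ 2) (Set.Iio 0))
    (hϑ2' : AntitoneOn (fun s => ϑ s / s ^ 2) (Set.Ioi 0))
    (hϑ3 : Filter.Tendsto (fun s => ϑ s / s ^ 2) (Filter.cocompact ℝ) (nhds (α ^ 2 / 2)))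
    (hfodd : ∀ s, f (-s) = - f s) (hfC2 : ContDiff ℝ 2 f) (hf0 : f 0 = 0)
    (hf' : ∀ s, HasDerivAt f ((Real.sqrt (ϑ (f s)))⁻¹) s) :
    Filter.Tendsto (fun s => f s / s) (Filter.cocompact ℝ) (nhds 0) := by
  simpa only [div_eq_inv_mul, smul_eq_mul] using f_over_s_limit_at_infinity_general hf'
    ((tendsto_inv_sqrt_cobounded_of_tendsto_div_sq (by positivity) hϑ3).comp tendsto_comap)
end

section
/- For all s ∈ ℝ, |f(s)| ≤ (8/α²)^{1/4} · |s|^{1/2}. -/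
/-!
The derivative of `f²` is `2 f / √(ϑ ∘ f)`. By monotonicity, `ϑ t / t²` is bounded below by its
limit `α² / 2` at infinity, so this derivative is at most `√(8 / α²)` in absolute value, and the
mean value inequality gives `f(s)² ≤ √(8 / α²) |s|`.
-/

open Filter Set Topology

theorem le_of_monotoneOn_of_antitoneOn_of_tendsto_cocompact {X Y : Type*} [LinearOrder X]
    [NoMinOrder X] [NoMaxOrder X] [TopologicalSpace X] [OrderClosedTopology X] [Preorder Y]
    [TopologicalSpace Y] [ClosedIicTopology Y] {g : X → Y} {a x : X} {l : Y}
    (hmono : MonotoneOn g (Iio a)) (hanti : AntitoneOn g (Ioi a))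
    (hlim : Tendsto g (cocompact X) (𝓝 l)) (hx : x ≠ a) : l ≤ g x := by
  have : Nonempty X := ⟨x⟩
  rcases hx.lt_or_gt with hxa | hax
  · refine le_of_tendsto (hlim.mono_left atBot_le_cocompact) ?_
    filter_upwards [eventually_le_atBot x] with y hyx
    exact hmono (hyx.trans_lt hxa) hxa hyx
  · refine le_of_tendsto (hlim.mono_left atTop_le_cocompact) ?_
    filter_upwards [eventually_ge_atTop x] with y hxy
    exact hanti hax (hax.trans_le hxy) hxy

theorem mul_sq_le_of_tendsto_div_sq {ϑ : ℝ → ℝ} {l : ℝ} (h0 : 0 ≤ ϑ 0)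
    (hmono : MonotoneOn (fun s => ϑ s / s ^ 2) (Iio 0))
    (hanti : AntitoneOn (fun s => ϑ s / s ^ 2) (Ioi 0))
    (hlim : Tendsto (fun s => ϑ s / s ^ 2) (cocompact ℝ) (𝓝 l)) (t : ℝ) :
    l * t ^ 2 ≤ ϑ t := by
  rcases eq_or_ne t 0 with rfl | ht
  · simpa using h0
  · have le_div : l ≤ ϑ t / t ^ 2 :=
      le_of_monotoneOn_of_antitoneOn_of_tendsto_cocompact (g := fun s => ϑ s / s ^ 2)
        hmono hanti hlim ht
    rwa [le_div_iff₀ (by positivity)] at le_div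

theorem abs_norm_sq_sub_norm_sq_le_of_hasDerivAt {E : Type*} [NormedAddCommGroup E]
    [InnerProductSpace ℝ E] {f f' : ℝ → E} {C : ℝ} (hf : ∀ s, HasDerivAt f (f' s) s)
    (hC : ∀ s, |2 * inner ℝ (f s) (f' s)| ≤ C) (s t : ℝ) :
    |‖f s‖ ^ 2 - ‖f t‖ ^ 2| ≤ C * |s - t| :=
  convex_univ.norm_image_sub_le_of_norm_hasDerivWithin_le
    (fun u _ => (hf u).norm_sq.hasDerivWithinAt) (fun u _ => hC u) (mem_univ t) (mem_univ s)

theorem abs_le_rpow_mul_rpow_of_sq_le_sqrt_mul {x y K : ℝ} (hK : 0 ≤ K) (h : x ^ 2 ≤ √K * y) :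
    |x| ≤ K ^ ((1 : ℝ) / 4) * y ^ ((1 : ℝ) / 2) := by
  have sqrt_sqrt : √√K = K ^ ((1 : ℝ) / 4) := by
    rw [Real.sqrt_eq_rpow, Real.sqrt_eq_rpow, ← Real.rpow_mul hK]
    norm_num
  calc |x| ≤ √(√K * y) := Real.abs_le_sqrt h
    _ = √√K * √y := Real.sqrt_mul (Real.sqrt_nonneg K) y
    _ = K ^ ((1 : ℝ) / 4) * y ^ ((1 : ℝ) / 2) := by rw [sqrt_sqrt, Real.sqrt_eq_rpow]

theorem sq_div_sqrt_le_inv {x y a : ℝ} (ha : 0 < a) (hy : 0 < y) (h : a * x ^ 2 ≤ y) :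
    (x / √y) ^ 2 ≤ a⁻¹ := by
  rw [div_pow, Real.sq_sqrt hy.le, div_le_iff₀ hy]
  exact (le_inv_mul_iff₀ ha).2 h

theorem f_global_sqrt_bound_general {ϑ f : ℝ → ℝ} {α : ℝ} (hα : α ≠ 0) (hϑpos : ∀ t, 0 < ϑ t)
    (hϑ : ∀ t, α ^ 2 / 2 * t ^ 2 ≤ ϑ t) (hf0 : f 0 = 0)
    (hf' : ∀ s, HasDerivAt f (√(ϑ (f s)))⁻¹ s) (s : ℝ) :
    |f s| ≤ (8 / α ^ 2) ^ ((1 : ℝ) / 4) * |s| ^ ((1 : ℝ) / 2) := by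
  have abs_deriv_sq_le (u : ℝ) : |2 * inner ℝ (f u) (√(ϑ (f u)))⁻¹| ≤ √(8 / α ^ 2) := by
    refine Real.abs_le_sqrt ?_
    calc (2 * inner ℝ (f u) (√(ϑ (f u)))⁻¹) ^ 2 = 4 * (f u / √(ϑ (f u))) ^ 2 := by
          rw [Real.inner_apply]
          ring
      _ ≤ 4 * (α ^ 2 / 2)⁻¹ := by
          gcongr
          exact sq_div_sqrt_le_inv (by positivity) (hϑpos (f u)) (hϑ (f u))
      _ = 8 / α ^ 2 := by ring
  have sq_le : f s ^ 2 ≤ √(8 / α ^ 2) * |s| := by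
    simpa [hf0] using abs_norm_sq_sub_norm_sq_le_of_hasDerivAt hf' abs_deriv_sq_le s 0
  exact abs_le_rpow_mul_rpow_of_sq_le_sqrt_mul (by positivity) sq_le

/-- `|f(s)| ≤ (8/α²)^{1/4}·|s|^{1/2}` for all `s ∈ ℝ`. -/
theorem f_global_sqrt_bound (ϑ f : ℝ → ℝ) (α : ℝ) (hα : 0 < α)
    (hϑC1 : ContDiff ℝ 1 ϑ) (hϑeven : ∀ s, ϑ (-s) = ϑ s) (hϑ1 : ∀ s, 1 ≤ ϑ s)
    (hϑ1' : StrictAntiOn ϑ (Set.Iio 0)) (hϑ1'' : StrictMonoOn ϑ (Set.Ioi 0))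
    (hϑ2 : MonotoneOn (fun s => ϑ s / s ^ 2) (Set.Iio 0))
    (hϑ2' : AntitoneOn (fun s => ϑ s / s ^ 2) (Set.Ioi 0))
    (hϑ3 : Filter.Tendsto (fun s => ϑ s / s ^ 2) (Filter.cocompact ℝ) (nhds (α ^ 2 / 2)))
    (hfodd : ∀ s, f (-s) = - f s) (hfC2 : ContDiff ℝ 2 f) (hf0 : f 0 = 0)
    (hf' : ∀ s, HasDerivAt f ((Real.sqrt (ϑ (f s)))⁻¹) s) :
    ∀ s : ℝ, |f s| ≤ (8 / α ^ 2) ^ ((1:ℝ)/4) * |s| ^ ((1:ℝ)/2) :=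
  f_global_sqrt_bound_general hα.ne' (fun t => one_pos.trans_le (hϑ1 t))
    (mul_sq_le_of_tendsto_div_sq (zero_le_one.trans (hϑ1 0)) hϑ2 hϑ2' hϑ3) hf0 hf'
end

section
/- Let Ω ⊂ ℝᴺ be a bounded measurable set with the Lebesgue measure, and let Y be a finite-dimensional subspace of L²(Ω) with unit sphere S = {u ∈ Y : ‖u‖_{L²} = 1}. Then there exist constants β > 0 and α > 0 such that for every u ∈ S and every s > α, the Lebesgue measure of [1 < |s u|] := {x ∈ Ω : 1 < s|u(x)|} satisfies |[1 < |s u|]| ≥ β. -/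
/-!
If the bound fails on a compact set `K ⊆ Lᵖ` avoiding `0`, then for every `n` some `u n ∈ K`
satisfies `μ {x | 1 / (n + 1) < ‖u n x‖} ≤ 1 / (n + 1)`, so `u` tends to `0` in measure. Yet a
subsequence of `u` converges in `Lᵖ`, hence in measure, to a point of `K`, which must then be `0`.
The unit sphere of a finite-dimensional subspace is such a set `K`.
-/

open Filter MeasureTheory Topology

theorem isCompact_inter_of_isClosed_of_isBounded {V : Type*} [PseudoMetricSpace V] {s t : Set V}
    [ProperSpace s] (ht : IsClosed t) (htb : Bornology.IsBounded t) : IsCompact (s ∩ t) := by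
  have hpre : IsCompact ((↑) ⁻¹' t : Set s) :=
    Metric.isCompact_of_isClosed_isBounded (ht.preimage continuous_subtype_val)
      (isometry_subtype_coe.antilipschitz.isBounded_preimage htb)
  simpa only [Subtype.image_preimage_coe] using hpre.image continuous_subtype_val

section Measure

variable {X E : Type*} [MeasurableSpace X] {μ : Measure X}

theorem tendstoInMeasure_of_tendsto_measure_lt_dist {ι : Type*} [PseudoMetricSpace E]
    {f : ι → X → E} {g : X → E} {l : Filter ι} {δ : ι → ℝ} (hδ : Tendsto δ l (𝓝 0))
    (hfg : Tendsto (fun i ↦ μ {x | δ i < dist (f i x) (g x)}) l (𝓝 0)) :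
    TendstoInMeasure μ f l g := by
  refine tendstoInMeasure_iff_dist.mpr fun ε hε ↦ ?_
  refine tendsto_of_tendsto_of_tendsto_of_le_of_le' tendsto_const_nhds hfg
    (.of_forall fun _ ↦ zero_le) ?_
  filter_upwards [hδ.eventually_lt_const hε] with i hi
  exact measure_mono fun _ hx ↦ hi.trans_le hx

variable [NormedAddCommGroup E] {p : ENNReal} [Fact (1 ≤ p)] {K : Set (Lp E p μ)}

theorem exists_forall_ofReal_lt_measure_lt_norm_of_isCompact (hK : IsCompact K) (h0 : 0 ∉ K) :
    ∃ ε > (0 : ℝ), ∀ u ∈ K, ENNReal.ofReal ε < μ {x | ε < ‖u x‖} := by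
  by_contra! h
  let ε : ℕ → ℝ := fun n ↦ 1 / (n + 1)
  have hε : Tendsto ε atTop (𝓝 0) := tendsto_one_div_add_atTop_nhds_zero_nat
  choose u huK hu using fun n ↦ h (ε n) Nat.one_div_pos_of_nat
  have hu_zero : TendstoInMeasure μ (fun n ↦ u n) atTop (0 : X → E) := by
    refine tendstoInMeasure_of_tendsto_measure_lt_dist hε ?_
    simp only [Pi.zero_apply, dist_zero_right]
    refine tendsto_of_tendsto_of_tendsto_of_le_of_le tendsto_const_nhds ?_ (fun _ ↦ zero_le) hu
    simpa only [ENNReal.ofReal_zero] using ENNReal.tendsto_ofReal hε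
  obtain ⟨v, hvK, φ, hφ, huv⟩ := hK.tendsto_subseq huK
  have hv : v =ᵐ[μ] 0 :=
    tendstoInMeasure_ae_unique (tendstoInMeasure_of_tendsto_Lp huv)
      (hu_zero.comp hφ.tendsto_atTop)
  exact h0 (Lp.eq_zero_iff_ae_eq_zero.mpr hv ▸ hvK)

theorem measure_superlevel_lower_bound_general (hK : IsCompact K) (h0 : 0 ∉ K) :
    ∃ β > (0 : ℝ), ∃ α > (0 : ℝ), ∀ u ∈ K, ∀ s : ℝ, α < s →
      ENNReal.ofReal β ≤ μ {x | 1 < s * ‖u x‖} := by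
  obtain ⟨ε, hε, hεK⟩ := exists_forall_ofReal_lt_measure_lt_norm_of_isCompact hK h0
  refine ⟨ε, hε, ε⁻¹, inv_pos.mpr hε, fun u hu s hs ↦ (hεK u hu).le.trans (measure_mono ?_)⟩
  intro x (hx : ε < ‖u x‖)
  calc
    1 = ε⁻¹ * ε := (inv_mul_cancel₀ hε.ne').symm
    _ < s * ‖u x‖ := mul_lt_mul'' hs hx (inv_pos.mpr hε).le hε.le

end Measure

open MeasureTheory in
/-- Lemma 2.3(i), first part: on the unit sphere of a finite-dimensional subspace
`Y ⊆ L²(Ω)`, the measure of `[1 < |su|]` is uniformly bounded below for large `s`. -/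
theorem measure_superlevel_lower_bound (N : ℕ) (Ω : Set (Fin N → ℝ))
    (hΩm : MeasurableSet Ω) (hΩb : Bornology.IsBounded Ω)
    (Y : Submodule ℝ (Lp ℝ 2 (volume.restrict Ω)))
    (hY : FiniteDimensional ℝ Y) :
    ∃ β > (0:ℝ), ∃ α > (0:ℝ), ∀ u ∈ Y, ‖u‖ = 1 → ∀ s : ℝ, α < s →
      ENNReal.ofReal β ≤ volume.restrict Ω {x | 1 < s * |u x|} := by
  have : ProperSpace (Y : Set (Lp ℝ 2 (volume.restrict Ω))) := FiniteDimensional.proper_real Y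
  have hK : IsCompact (↑Y ∩ Metric.sphere (0 : Lp ℝ 2 (volume.restrict Ω)) 1) :=
    isCompact_inter_of_isClosed_of_isBounded Metric.isClosed_sphere Metric.isBounded_sphere
  simpa using measure_superlevel_lower_bound_general hK (by simp)
end

section
/- The function r₁(s) = f(s)·ϑ(f(s))^{1/2} − s satisfies r₁(0) = 0 and r₁'(s) = ϑ'(f(s))·f(s)/(2ϑ(f(s))) ≥ 0 for all s > 0, and the function r₂(s) = 2s − f(s)·ϑ(f(s))^{1/2} satisfies r₂(0) = 0 and r₂'(s) = 1 − ϑ'(f(s))·f(s)/(2ϑ(f(s))) ≥ 0 for all s > 0. -/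
/-!
Write `h s = f s * √(ϑ (f s))`. Because `f' = 1 / √(ϑ ∘ f)`, the product rule gives
`h' = 1 + ϑ'(f) f / (2 ϑ(f))`, so both claims concern the logarithmic derivative `x ϑ'(x) / ϑ(x)`
at `x = f s > 0`: it is nonnegative because `ϑ` is monotone, and at most `2` because
`ϑ(x) / x ^ 2` is antitone.
-/

open Set Topology

theorem mul_deriv_le_of_antitoneOn_div_pow {g : ℝ → ℝ} {S : Set ℝ} {x : ℝ} (n : ℕ)
    (hanti : AntitoneOn (fun y => g y / y ^ n) S) (hS : S ∈ 𝓝 x) (hx : 0 < x)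
    (hg : DifferentiableAt ℝ g x) : x * deriv g x ≤ n * g x := by
  have hquot : deriv (fun y => g y / y ^ n) x =
      (deriv g x * x ^ n - g x * (n * x ^ (n - 1))) / (x ^ n) ^ 2 :=
    (hg.hasDerivAt.fun_div (hasDerivAt_pow n x) (by positivity)).deriv
  have hnonpos : deriv (fun y => g y / y ^ n) x ≤ 0 := by
    rw [← derivWithin_of_mem_nhds hS]
    exact hanti.derivWithin_nonpos
  have hnum : deriv g x * x ^ n ≤ g x * (n * x ^ (n - 1)) := by
    rwa [hquot, div_le_iff₀ (by positivity), zero_mul, sub_nonpos] at hnonpos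
  have hpow : (n : ℝ) * x ^ (n - 1) * x = n * x ^ n := by
    cases n with
    | zero => simp
    | succ m => rw [Nat.add_sub_cancel, pow_succ, mul_assoc]
  refine le_of_mul_le_mul_right ?_ (pow_pos hx n)
  calc x * deriv g x * x ^ n = deriv g x * x ^ n * x := by ring
    _ ≤ g x * (n * x ^ (n - 1)) * x := by gcongr
    _ = n * g x * x ^ n := by rw [mul_assoc, hpow]; ring

theorem hasDerivAt_mul_sqrt_comp {g f : ℝ → ℝ} {g' s : ℝ}
    (hf : HasDerivAt f (√(g (f s)))⁻¹ s) (hg : HasDerivAt g g' (f s)) (hpos : 0 < g (f s)) :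
    HasDerivAt (fun t => f t * √(g (f t))) (1 + g' * f s / (2 * g (f s))) s := by
  have hsqrt : HasDerivAt (fun t => √(g (f t))) (g' * (√(g (f s)))⁻¹ / (2 * √(g (f s)))) s :=
    (hg.comp s hf).sqrt hpos.ne'
  refine (hf.fun_mul hsqrt).congr_deriv ?_
  calc (√(g (f s)))⁻¹ * √(g (f s)) + f s * (g' * (√(g (f s)))⁻¹ / (2 * √(g (f s))))
      = 1 + g' * f s / (2 * √(g (f s)) ^ 2) := by field_simp
    _ = 1 + g' * f s / (2 * g (f s)) := by rw [Real.sq_sqrt hpos.le]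

theorem pos_of_hasDerivAt_inv_sqrt {g f : ℝ → ℝ} (hpos : ∀ x, 0 ≤ x → 0 < g x)
    (hf0 : f 0 = 0) (hfcont : ContinuousOn f (Ici 0))
    (hf : ∀ s, 0 < s → HasDerivAt f (√(g (f s)))⁻¹ s) {s : ℝ} (hs : 0 < s) : 0 < f s := by
  have hderiv : ∀ t ∈ interior (Ici (0 : ℝ)), HasDerivAt f (√(g (f t)))⁻¹ t := fun t ht =>
    hf t (by rwa [interior_Ici] at ht)
  -- `g` is only known to be positive on `[0, ∞)`, so `f' > 0` is available only once `0 ≤ f`.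
  have hmono : MonotoneOn f (Ici 0) :=
    monotoneOn_of_deriv_nonneg (convex_Ici 0) hfcont
      (fun t ht => (hderiv t ht).differentiableAt.differentiableWithinAt)
      fun t ht => by rw [(hderiv t ht).deriv]; positivity
  have hnonneg : ∀ t, 0 ≤ t → 0 ≤ f t := fun t ht => hf0 ▸ hmono self_mem_Ici ht ht
  have hstrict : StrictMonoOn f (Ici 0) :=
    strictMonoOn_of_deriv_pos (convex_Ici 0) hfcont fun t ht => by
      rw [(hderiv t ht).deriv]
      exact inv_pos.mpr (Real.sqrt_pos.mpr (hpos _ (hnonneg t (interior_subset ht))))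
  exact hf0 ▸ hstrict self_mem_Ici hs.le hs

theorem aux_functions_derivatives_general {ϑ f : ℝ → ℝ}
    (hϑdiff : DifferentiableOn ℝ ϑ (Ioi 0)) (hϑpos : ∀ x, 0 ≤ x → 0 < ϑ x)
    (hϑmono : MonotoneOn ϑ (Ioi 0)) (hϑanti : AntitoneOn (fun x => ϑ x / x ^ 2) (Ioi 0))
    (hf0 : f 0 = 0) (hfcont : ContinuousOn f (Ici 0))
    (hf' : ∀ s, 0 < s → HasDerivAt f (√(ϑ (f s)))⁻¹ s) :
    (f 0 * √(ϑ (f 0)) - 0 = 0) ∧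
    (∀ s : ℝ, 0 < s →
      HasDerivAt (fun t => f t * √(ϑ (f t)) - t) (deriv ϑ (f s) * f s / (2 * ϑ (f s))) s ∧
      0 ≤ deriv ϑ (f s) * f s / (2 * ϑ (f s))) ∧
    (2 * (0 : ℝ) - f 0 * √(ϑ (f 0)) = 0) ∧
    (∀ s : ℝ, 0 < s →
      HasDerivAt (fun t => 2 * t - f t * √(ϑ (f t)))
        (1 - deriv ϑ (f s) * f s / (2 * ϑ (f s))) s ∧
      0 ≤ 1 - deriv ϑ (f s) * f s / (2 * ϑ (f s))) := by
  have hfpos : ∀ s, 0 < s → 0 < f s := fun s => pos_of_hasDerivAt_inv_sqrt hϑpos hf0 hfcont hf'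
  have hϑfpos : ∀ s, 0 < s → 0 < ϑ (f s) := fun s hs => hϑpos _ (hfpos s hs).le
  have hdiff : ∀ x, 0 < x → DifferentiableAt ℝ ϑ x := fun x hx =>
    hϑdiff.differentiableAt (Ioi_mem_nhds hx)
  have hprod : ∀ s, 0 < s → HasDerivAt (fun t => f t * √(ϑ (f t)))
      (1 + deriv ϑ (f s) * f s / (2 * ϑ (f s))) s := fun s hs =>
    hasDerivAt_mul_sqrt_comp (hf' s hs) (hdiff _ (hfpos s hs)).hasDerivAt (hϑfpos s hs)
  refine ⟨by simp [hf0], fun s hs => ⟨?_, ?_⟩, by simp [hf0], fun s hs => ⟨?_, ?_⟩⟩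
  · exact ((hprod s hs).sub (hasDerivAt_id s)).congr_deriv (by ring)
  · have hderiv : 0 ≤ deriv ϑ (f s) := by
      rw [← derivWithin_of_mem_nhds (Ioi_mem_nhds (hfpos s hs))]
      exact hϑmono.derivWithin_nonneg
    exact div_nonneg (mul_nonneg hderiv (hfpos s hs).le) (mul_pos two_pos (hϑfpos s hs)).le
  · exact (((hasDerivAt_id s).const_mul 2).sub (hprod s hs)).congr_deriv (by ring)
  · rw [sub_nonneg, div_le_one (mul_pos two_pos (hϑfpos s hs)), mul_comm]
    exact mul_deriv_le_of_antitoneOn_div_pow 2 hϑanti (Ioi_mem_nhds (hfpos s hs)) (hfpos s hs)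
      (hdiff _ (hfpos s hs))

/-- The auxiliary functions `r₁(s) = f(s)ϑ(f(s))^{1/2} - s` and
`r₂(s) = 2s - f(s)ϑ(f(s))^{1/2}` vanish at `0` and have the indicated
nonnegative derivatives for `s > 0`. -/
theorem aux_functions_derivatives (ϑ f : ℝ → ℝ)
    (hϑC1 : ContDiff ℝ 1 ϑ) (hϑeven : ∀ s, ϑ (-s) = ϑ s) (hϑ1 : ∀ s, 1 ≤ ϑ s)
    (hϑ1' : StrictAntiOn ϑ (Set.Iio 0)) (hϑ1'' : StrictMonoOn ϑ (Set.Ioi 0))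
    (hϑ2 : MonotoneOn (fun s => ϑ s / s ^ 2) (Set.Iio 0))
    (hϑ2' : AntitoneOn (fun s => ϑ s / s ^ 2) (Set.Ioi 0))
    (hfodd : ∀ s, f (-s) = - f s) (hfC2 : ContDiff ℝ 2 f) (hf0 : f 0 = 0)
    (hf' : ∀ s, HasDerivAt f ((Real.sqrt (ϑ (f s)))⁻¹) s) :
    (f 0 * Real.sqrt (ϑ (f 0)) - 0 = 0) ∧
    (∀ s : ℝ, 0 < s →
      HasDerivAt (fun t => f t * Real.sqrt (ϑ (f t)) - t)
        (deriv ϑ (f s) * f s / (2 * ϑ (f s))) s ∧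
      0 ≤ deriv ϑ (f s) * f s / (2 * ϑ (f s))) ∧
    (2 * (0:ℝ) - f 0 * Real.sqrt (ϑ (f 0)) = 0) ∧
    (∀ s : ℝ, 0 < s →
      HasDerivAt (fun t => 2 * t - f t * Real.sqrt (ϑ (f t)))
        (1 - deriv ϑ (f s) * f s / (2 * ϑ (f s))) s ∧
      0 ≤ 1 - deriv ϑ (f s) * f s / (2 * ϑ (f s))) :=
  aux_functions_derivatives_general (hϑC1.differentiable one_ne_zero).differentiableOn
    (fun x _ => one_pos.trans_le (hϑ1 x)) hϑ1''.monotoneOn hϑ2' hf0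
    hfC2.continuous.continuousOn fun s _ => hf' s
end
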